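/- There is a computable function F from (encoded) invertible Mealy automata to Booleans such that for every bounded invertible Mealy automaton A, F(A) = true if and only if the automaton group G_A is finite. In other words, the finiteness problem for groups generated by bounded automata is decidable. -/

import Mathlib

/-- A Mealy automaton over alphabet `X` with state set `S`:
the transition-output function sends `(s, x)` to `(output letter, next state)`. -/
structure Mealy (S X : Type*) where
  step : S → X → X × S

namespace Mealy

variable {S X : Type*}

/-- The section `s|_v`: the state reached after processing the word `v` from state `s`. -/
def sec (A : Mealy S X) (s : S) : List X → S
  | [] => s
  | x :: v => A.sec (A.step s x).2 v

/-- The action of a state on finite words (lists of letters, read left to right). -/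
def act (A : Mealy S X) (s : S) : List X → List X
  | [] => []
  | x :: v => (A.step s x).1 :: A.act (A.step s x).2 v

/-- A state is trivial if it acts on `X^*` as the identity. -/
def IsTrivialState (A : Mealy S X) (s : S) : Prop := ∀ v : List X, A.act s v = v

/-- An automaton is invertible if every state acts on the letters by a permutation. -/
def Invertible (A : Mealy S X) : Prop :=
  ∀ s : S, Function.Bijective fun x : X => (A.step s x).1

/-- The automaton group `G_A`: the subgroup of permutations of `X^*` generated by
the permutations defined by the states of `A`. -/
def autGroup (A : Mealy S X) : Subgroup (Equiv.Perm (List X)) :=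
  Subgroup.closure { f : Equiv.Perm (List X) | ∃ s : S, ∀ v : List X, f v = A.act s v }

/-- A left-infinite sequence `…x₂x₁` is encoded as `p : ℕ → X` with `p 0 = x₁`, `p 1 = x₂`, ….
It is post-critical if it is the sequence of input labels or of output labels of a
left-infinite directed path in `A` ending at a non-trivial state. -/
def IsPostCritical (A : Mealy S X) (p : ℕ → X) : Prop :=
  ∃ (σ : ℕ → S) (inp out : ℕ → X),
    (∀ n, A.step (σ (n + 1)) (inp n) = (out n, σ n)) ∧
      ¬A.IsTrivialState (σ 0) ∧ (p = inp ∨ p = out)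

/-- The post-critical set of `A`. -/
def PostCriticalSet (A : Mealy S X) : Set (ℕ → X) := { p | A.IsPostCritical p }

/-- An automaton is bounded if its post-critical set is finite. -/
def Bounded (A : Mealy S X) : Prop := A.PostCriticalSet.Finite

/-- The length-`n` suffix (as a finite word, read left to right) of a left-infinite
sequence `…x₂x₁` encoded as `p : ℕ → X`: the word `xₙ…x₂x₁`. -/
def lsuffix (p : ℕ → X) (n : ℕ) : List X := (List.range n).reverse.map p

/-- A finite word is post-critical if it is a suffix of some post-critical sequence. -/
def IsPostCriticalWord (A : Mealy S X) (v : List X) : Prop :=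
  ∃ p : ℕ → X, A.IsPostCritical p ∧ v = lsuffix p v.length

/-- The base relation for `e`-equivalence: `v ≈ u` if some state `s` satisfies
`s|_v` trivial and `s(v) = u`, or `s|_u` trivial and `s(u) = v`. -/
def ERel (A : Mealy S X) (v u : List X) : Prop :=
  ∃ s : S, (A.IsTrivialState (A.sec s v) ∧ A.act s v = u) ∨
    (A.IsTrivialState (A.sec s u) ∧ A.act s u = v)

/-- `e`-equivalence: the equivalence relation generated by `≈`. -/
def EEquiv (A : Mealy S X) : List X → List X → Prop := Relation.EqvGen A.ERel

/-- The `e`-orbit of a word. -/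
def eOrbit (A : Mealy S X) (v : List X) : Set (List X) := { u | A.EEquiv v u }

/-- The orbit of a finite word under the automaton group. -/
def orbit (A : Mealy S X) (v : List X) : Set (List X) := { u | ∃ g ∈ A.autGroup, g v = u }

/-- Reachability by a directed path in the automaton. -/
def Reaches (A : Mealy S X) : S → S → Prop :=
  Relation.ReflTransGen fun a b => ∃ x : X, (A.step a x).2 = b

/-- The states of the circuit part `C(A)`: states reachable by a directed path
from some directed cycle of `A`. -/
def circuitStates (A : Mealy S X) : Set S :=
  { s | ∃ t : S, (∃ x : X, A.Reaches (A.step t x).2 t) ∧ A.Reaches t s }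

/-- The circuit part `C(A)` as a subautomaton. -/
def circuitPart (A : Mealy S X) : Mealy A.circuitStates X where
  step s x :=
    ((A.step s.1 x).1,
      ⟨(A.step s.1 x).2, by
        obtain ⟨t, hc, hr⟩ := s.2
        exact ⟨t, hc, hr.tail ⟨x, rfl⟩⟩⟩)

/-- The subautomaton induced on a subset of states closed under transitions. -/
def subautomaton (A : Mealy S X) (T : Set S)
    (hT : ∀ s ∈ T, ∀ x : X, (A.step s x).2 ∈ T) : Mealy T X where
  step s x := ((A.step s.1 x).1, ⟨(A.step s.1 x).2, hT s.1 s.2 x⟩)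

/-- The extension of a length- and prefix-preserving map on finite words to
right-infinite sequences (letter by letter). -/
def extOmega (f : List X → List X) (w : ℕ → X) : ℕ → X :=
  fun n => (f ((List.range (n + 1)).map w)).getD n (w n)

/-- The orbit of a right-infinite sequence under the automaton group. -/
def orbitOmega (A : Mealy S X) (w : ℕ → X) : Set (ℕ → X) :=
  { w' | ∃ g ∈ A.autGroup, w' = extOmega (⇑(g : Equiv.Perm (List X))) w }

/-- The group `G_A` is level-transitive if it acts transitively on each level `X^n`. -/
def LevelTransitive (A : Mealy S X) : Prop :=
  ∀ v u : List X, v.length = u.length → ∃ g ∈ A.autGroup, g v = u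

end Mealy

/-- The run of a deterministic finite-state machine on a right-infinite input:
`dfaRun δ q₀ w n` is the state after reading the first `n` letters. -/
def dfaRun {Q X : Type*} (δ : Q → X → Q) (q₀ : Q) (w : ℕ → X) : ℕ → Q
  | 0 => q₀
  | n + 1 => δ (dfaRun δ q₀ w n) (w n)

/-- A concrete encoding of an invertible Mealy automaton (with state set `Fin n`
over alphabet `Fin k`) as a natural number. -/
def encodeAut (n k : ℕ) (step : Fin n → Fin k → Fin k × Fin n) : ℕ :=
  Nat.pair n (Nat.pair k (Encodable.encode
    ((List.finRange n).flatMap fun s =>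
      (List.finRange k).map fun x =>
        Nat.pair ((step s x).1 : ℕ) ((step s x).2 : ℕ))))

/-!
Draw an edge from each word `v` to `s(v)` for every state `s`, and call it nontrivial if the
section `s|_v` is. In a bounded automaton two loops through nontrivial states are never connected
by a path leaving the first one, so the number of nontrivial edges on a level is bounded by a
computable constant. The trivial edges generate `e`-equivalence.

Appending a letter to a word enlarges its `e`-class only if classes merge, and then the word is
`e`-equivalent to an endpoint of a nontrivial edge. The `e`-equivalences among these endpoints and
the sections of the nontrivial edges form a profile, which takes boundedly many values and governs
all later merging. If two merging prefixes of a word have the same profile, the merging between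
them can be repeated forever and `e`-classes are unbounded, so the group is infinite. If the group
is finite, the number of merging steps along a word, hence the size of `e`-classes and of orbits, is
therefore at most a computable `D`.

Words of states then act on orbits with at most `D` points, and by the pigeonhole principle every
word longer than a computable `B` acts as a shorter one. Conversely, if every word of `B + 1` states
acts as one of length at most `B`, then the generated monoid is finite, hence is the group. Equality
of two words of states of bounded length can be tested on words of computably bounded length.
-/

section Pigeonhole

theorem exists_apply_append_eq {α β : Type*} (f : List α → β) (hf : (Set.range f).Finite)
    {w : List α} (hw : (Set.range f).ncard ≤ w.length) :
    ∃ z u v, w = z ++ u ++ v ∧ u ≠ [] ∧ f (z ++ u) = f z := by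
  obtain ⟨i, j, hij, heq⟩ : ∃ i j : Fin (w.length + 1), i < j ∧ f (w.take i) = f (w.take j) := by
    obtain ⟨i, -, j, -, hne, heq⟩ := Set.exists_ne_map_eq_of_ncard_lt_of_maps_to
      (s := (Set.univ : Set (Fin (w.length + 1)))) (t := Set.range f)
      (f := fun i : Fin (w.length + 1) => f (w.take i))
      (by simpa [Set.ncard_univ] using Nat.lt_succ_of_le hw) (fun i _ => ⟨_, rfl⟩) hf
    rcases hne.lt_or_gt with h | h
    · exact ⟨i, j, h, heq⟩
    · exact ⟨j, i, h, heq.symm⟩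
  have hsplit : w.take i ++ (w.take j).drop i = w.take j := by
    conv_rhs => rw [← List.take_append_drop i (w.take j), List.take_take,
      min_eq_left (Fin.val_le_of_le hij.le)]
  refine ⟨w.take i, (w.take j).drop i, w.drop j, by rw [hsplit, List.take_append_drop],
    fun h => ?_, by rw [hsplit, heq]⟩
  have := congrArg List.length h
  simp only [List.length_drop, List.length_take, List.length_nil] at this
  omega

theorem ncard_le_mul_of_subset_biUnion {ι α : Type*} {W : Set α} {t : Set ι} {f : ι → Set α}
    {c K : ℕ} (hW : W ⊆ ⋃ i ∈ t, f i) (ht : t.Finite) (hc : t.ncard ≤ c)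
    (hf : ∀ i ∈ t, (f i).Finite) (hK : ∀ i ∈ t, (f i).ncard ≤ K) : W.ncard ≤ c * K :=
  calc W.ncard ≤ (⋃ i ∈ t, f i).ncard := Set.ncard_le_ncard hW (ht.biUnion hf)
    _ ≤ ∑ᶠ i ∈ t, (f i).ncard := ht.ncard_biUnion_le f
    _ = ∑ i ∈ ht.toFinset, (f i).ncard := finsum_mem_eq_finite_toFinset_sum _ ht
    _ ≤ ht.toFinset.card * K :=
      Finset.sum_le_card_nsmul _ _ K fun i hi => hK i (ht.mem_toFinset.1 hi)
    _ ≤ c * K := Nat.mul_le_mul_right K (by rwa [← Set.ncard_eq_toFinset_card t ht])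

theorem ncard_setOf_length_eq (X : Type*) [Finite X] (m : ℕ) :
    {v : List X | v.length = m}.ncard = Nat.card X ^ m := by
  have := Fintype.ofFinite X
  rw [← Nat.card_coe_set_eq, Nat.card_eq_fintype_card (α := X), ← card_vector m]
  exact Nat.card_eq_fintype_card (α := List.Vector X m)

end Pigeonhole

namespace Mealy

variable {S X : Type*} {A : Mealy S X}

section Words

theorem sec_append (A : Mealy S X) (s : S) (v w : List X) :
    A.sec s (v ++ w) = A.sec (A.sec s v) w := by
  induction v generalizing s with
  | nil => rfl
  | cons _ _ ih => exact ih _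

theorem act_append (A : Mealy S X) (s : S) (v w : List X) :
    A.act s (v ++ w) = A.act s v ++ A.act (A.sec s v) w := by
  induction v generalizing s with
  | nil => rfl
  | cons x v ih => simp only [List.cons_append, act, sec, ih]

@[simp]
theorem length_act (A : Mealy S X) (s : S) (v : List X) : (A.act s v).length = v.length := by
  induction v generalizing s with
  | nil => rfl
  | cons x v ih => simp only [act, List.length_cons, ih]

theorem IsTrivialState.sec {s : S} (h : A.IsTrivialState s) (v : List X) :
    A.IsTrivialState (A.sec s v) := fun w => by
  have := h (v ++ w)
  rw [act_append, h v] at this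
  exact List.append_cancel_left this

end Words

section LeftInfinite

/-- The left-infinite sequence obtained by appending the word `w` at the right end of `f`;
index `0` is the rightmost letter, so `f` is shifted by the length of `w`. -/
def appendWord (f : ℕ → X) : List X → ℕ → X
  | [] => f
  | x :: w => appendWord (fun i => Nat.casesOn i x f) w

theorem appendWord_add_length (f : ℕ → X) (w : List X) (i : ℕ) :
    appendWord f w (i + w.length) = f i := by
  induction w generalizing f i with
  | nil => rfl
  | cons x w ih => exact (congrArg _ (by simp only [List.length_cons]; omega)).trans (ih _ (i + 1))

theorem appendWord_cons_length (f : ℕ → X) (x : X) (w : List X) :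
    appendWord f (x :: w) w.length = x := by
  rw [← zero_add w.length]
  exact appendWord_add_length _ w 0

theorem appendWord_left_injective (w : List X) :
    Function.Injective fun f : ℕ → X => appendWord f w := fun f g h => funext fun i => by
  simpa only [appendWord_add_length] using congrFun h (i + w.length)

theorem iterate_appendWord_add (f : ℕ → X) (w : List X) (d i : ℕ) :
    (fun g => appendWord g w)^[d] f (i + d * w.length) = f i := by
  induction d generalizing f with
  | zero => simp
  | succ d ih =>
    rw [Function.iterate_succ_apply', add_one_mul, ← add_assoc, appendWord_add_length, ih]

/-- The label sequences of the left-infinite directed paths ending at `q`. -/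
def leftLabels (A : Mealy S X) (q : S) : Set (ℕ → X) :=
  {f | ∃ σ : ℕ → S, σ 0 = q ∧ ∀ i, (A.step (σ (i + 1)) (f i)).2 = σ i}

theorem appendWord_mem_leftLabels {q : S} {f : ℕ → X} (hf : f ∈ A.leftLabels q) (w : List X) :
    appendWord f w ∈ A.leftLabels (A.sec q w) := by
  induction w generalizing q f with
  | nil => exact hf
  | cons x w ih =>
    obtain ⟨σ, rfl, hσ⟩ := hf
    refine ih ⟨fun i => Nat.casesOn i (A.step (σ 0) x).2 σ, rfl, ?_⟩
    rintro (_ | i)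
    exacts [rfl, hσ i]

theorem leftLabels_subset_postCriticalSet {q : S} (hq : ¬A.IsTrivialState q) :
    A.leftLabels q ⊆ A.PostCriticalSet := by
  rintro f ⟨σ, rfl, hσ⟩
  exact ⟨σ, f, fun i => (A.step (σ (i + 1)) (f i)).1, fun i => Prod.ext rfl (hσ i), hq, .inl rfl⟩

theorem leftLabels_nonempty_of_loop {q : S} {w : List X} (hw : w ≠ []) (h : A.sec q w = q) :
    (A.leftLabels q).Nonempty := by
  have hpred (t : Set.range (A.sec q)) :
      ∃ (x : X) (t' : Set.range (A.sec q)), (A.step t'.1 x).2 = t.1 := by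
    obtain ⟨v, hv, ht⟩ : ∃ v ≠ [], A.sec q v = t.1 := by
      obtain ⟨_, v, rfl⟩ := t
      exact ⟨w ++ v, by simp [hw], by rw [sec_append, h]⟩
    refine ⟨v.getLast hv, ⟨_, v.dropLast, rfl⟩, ?_⟩
    rw [← ht]
    conv_rhs => rw [← List.dropLast_append_getLast hv, sec_append]
    rfl
  choose letter pred hpred using hpred
  let σ : ℕ → Set.range (A.sec q) := fun i => pred^[i] ⟨q, [], rfl⟩
  refine ⟨fun i => letter (σ i), fun i => σ i, rfl, fun i => ?_⟩
  simp only [σ, Function.iterate_succ_apply', hpred]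

/-- Appending the loop permutes the finite set of label sequences. -/
theorem exists_periodic_of_mem_leftLabels {q : S} {x : X} {u : List X}
    (hfin : (A.leftLabels q).Finite) (hloop : A.sec q (x :: u) = q) {f : ℕ → X}
    (hf : f ∈ A.leftLabels q) : ∃ p, Function.Periodic f (p + 1) ∧ f p = x := by
  have hmaps : Set.MapsTo (fun g => appendWord g (x :: u)) (A.leftLabels q) (A.leftLabels q) :=
    fun g hg => by simpa only [hloop] using appendWord_mem_leftLabels hg (x :: u)
  have : Finite (A.leftLabels q) := hfin
  obtain ⟨d, hd, hper⟩ := Function.Injective.mem_periodicPts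
    (hmaps.restrict_inj.2 (appendWord_left_injective (x :: u)).injOn) ⟨f, hf⟩
  have hfix : (fun g => appendWord g (x :: u))^[d] f = f := by
    simpa only [hmaps.iterate_restrict, Set.MapsTo.val_restrict_apply] using
      congrArg Subtype.val hper
  obtain ⟨d, rfl⟩ := Nat.exists_eq_add_one.2 hd
  refine ⟨u.length + d * (x :: u).length, fun i => ?_, ?_⟩
  · nth_rw 1 [← hfix]
    rw [← iterate_appendWord_add f (x :: u) (d + 1) i, List.length_cons]
    ring_nf
  · rw [← hfix, Function.iterate_succ_apply, iterate_appendWord_add, appendWord_cons_length]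

end LeftInfinite

section NontrivialSections

/-- Some section of `s` at a word of length `r` is nontrivial. -/
def NontrivialAt (A : Mealy S X) (r : ℕ) (s : S) : Prop :=
  ∃ w : List X, w.length = r ∧ ¬A.IsTrivialState (A.sec s w)

theorem NontrivialAt.of_sec {r : ℕ} {s : S} {v : List X} (h : A.NontrivialAt r (A.sec s v)) :
    A.NontrivialAt r s := by
  obtain ⟨w, rfl, hw⟩ := h
  refine ⟨(v ++ w).take w.length, by simp, fun ht => hw ?_⟩
  rw [← sec_append, ← List.take_append_drop w.length (v ++ w), sec_append]
  exact ht.sec _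

theorem exists_loop_of_nontrivialAt [Finite S] {s : S} (h : A.NontrivialAt (Nat.card S) s) :
    ∃ z w, w ≠ [] ∧ A.sec (A.sec s z) w = A.sec s z ∧ ¬A.IsTrivialState (A.sec s z) := by
  obtain ⟨w, hw, hn⟩ := h
  obtain ⟨z, u, v, rfl, hu, heq⟩ := exists_apply_append_eq (A.sec s) (Set.toFinite _) (w := w)
    ((Set.ncard_le_card _).trans hw.ge)
  rw [sec_append] at heq
  refine ⟨z, u, hu, heq, fun ht => hn ?_⟩
  rw [List.append_assoc, sec_append]
  exact ht.sec _

/-- A nontrivial loop reached by leaving a loop through `y ≠ x` would carry periodic labels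
(all label sequences ending there are periodic) that agree, far to the left, with the labels of
the first loop; comparing one letter gives `x = y`. -/
theorem Bounded.not_nontrivialAt_of_loop [Finite S] (hA : A.Bounded) {q : S} {x y : X}
    {u : List X} (hloop : A.sec q (x :: u) = q) (hy : y ≠ x) :
    ¬A.NontrivialAt (Nat.card S) (A.step q y).2 := by
  intro hn
  obtain ⟨z, w, hw, hloop', hz⟩ := exists_loop_of_nontrivialAt hn
  have hq : ¬A.IsTrivialState q := fun hq => hz (hq.sec (y :: z))
  have hfin {t : S} (ht : ¬A.IsTrivialState t) : (A.leftLabels t).Finite :=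
    hA.subset (leftLabels_subset_postCriticalSet ht)
  obtain ⟨f, hf⟩ := leftLabels_nonempty_of_loop (List.cons_ne_nil x u) hloop
  obtain ⟨p, hp, hfp⟩ := exists_periodic_of_mem_leftLabels (hfin hq) hloop hf
  obtain ⟨x', w, rfl⟩ := List.exists_cons_of_ne_nil hw
  obtain ⟨p', hp', -⟩ := exists_periodic_of_mem_leftLabels (hfin hz) hloop'
    (appendWord_mem_leftLabels hf (y :: z))
  apply hy
  calc y = appendWord f (y :: z) z.length := (appendWord_cons_length f y z).symm
    _ = appendWord f (y :: z) (z.length + (p + 1) * (p' + 1)) := (hp'.nat_mul (p + 1) _).symm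
    _ = f (p + p' * (p + 1)) := by
      rw [← appendWord_add_length f (y :: z)]
      congr 1
      simp only [List.length_cons]
      ring
    _ = f p := hp.nat_mul p' p
    _ = x := hfp

theorem ncard_range_sec_step_lt [Finite S] {s : S} {x : X}
    (h : ∀ u, A.sec s (x :: u) ≠ s) :
    (Set.range (A.sec (A.step s x).2)).ncard < (Set.range (A.sec s)).ncard :=
  Set.ncard_lt_ncard ⟨Set.range_subset_iff.2 fun u => ⟨x :: u, rfl⟩, fun hsub =>
    let ⟨u, hu⟩ := hsub ⟨[], rfl⟩
    h u hu⟩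

/-- A branching into two states that stay nontrivial can only occur off the loops, so the set
of reachable states shrinks at every branching. -/
theorem Bounded.ncard_nontrivialAt_le [Finite S] [Finite X] [Nonempty X] (hA : A.Bounded) (m : ℕ)
    (s : S) : {v | v.length = m ∧ A.NontrivialAt (Nat.card S) (A.sec s v)}.ncard ≤
      Nat.card X ^ (Set.range (A.sec s)).ncard := by
  have hfin (m : ℕ) (s : S) :
      {v | v.length = m ∧ A.NontrivialAt (Nat.card S) (A.sec s v)}.Finite :=
    (List.finite_length_eq X m).subset fun v hv => hv.1
  induction m generalizing s with
  | zero =>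
    calc _ ≤ ({[]} : Set (List X)).ncard :=
          Set.ncard_le_ncard fun v hv => List.eq_nil_of_length_eq_zero hv.1
      _ ≤ _ := by rw [Set.ncard_singleton]; exact Nat.pow_pos Nat.card_pos
  | succ m ih =>
    let T : Set X := {x | A.NontrivialAt (Nat.card S) (A.step s x).2}
    have hcover : {v | v.length = m + 1 ∧ A.NontrivialAt (Nat.card S) (A.sec s v)} ⊆
        ⋃ x ∈ T, (x :: ·) '' {v | v.length = m ∧
          A.NontrivialAt (Nat.card S) (A.sec (A.step s x).2 v)} := by
      rintro (_ | ⟨x, v⟩) ⟨hlen, hv⟩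
      · cases hlen
      · exact Set.mem_biUnion (x := x) (NontrivialAt.of_sec (v := v) hv)
          ⟨v, ⟨Nat.succ.inj hlen, hv⟩, rfl⟩
    have hchild (x : X) := (Set.ncard_image_le (f := (x :: ·)) (hfin m _)).trans
      (ih (A.step s x).2)
    have hX : 0 < Nat.card X := Nat.card_pos
    by_cases hT : T.Subsingleton
    · rw [← one_mul (Nat.card X ^ _)]
      refine ncard_le_mul_of_subset_biUnion hcover T.toFinite
        ((Set.ncard_le_one_iff_subsingleton).2 hT) (fun x _ => (hfin m _).image _) fun x _ =>
          (hchild x).trans (Nat.pow_le_pow_right hX (Set.ncard_le_ncard ?_))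
      exact Set.range_subset_iff.2 fun u => ⟨x :: u, rfl⟩
    · obtain ⟨y, hy, z, hz, hyz⟩ := Set.not_subsingleton_iff.1 hT
      have hnoloop (x : X) (u : List X) : A.sec s (x :: u) ≠ s := fun hloop => by
        by_cases hyx : y = x
        · exact hA.not_nontrivialAt_of_loop hloop (hyx ▸ hyz.symm) hz
        · exact hA.not_nontrivialAt_of_loop hloop hyx hy
      have hpos : 0 < (Set.range (A.sec s)).ncard := (Set.ncard_pos).2 ⟨s, [], rfl⟩
      rw [← Nat.sub_add_cancel hpos, pow_succ']
      exact ncard_le_mul_of_subset_biUnion hcover T.toFinite (Set.ncard_le_card T)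
        (fun x _ => (hfin m _).image _) fun x _ => (hchild x).trans
          (Nat.pow_le_pow_right hX (Nat.le_sub_one_of_lt (ncard_range_sec_step_lt (hnoloop x))))

end NontrivialSections

section NontrivialEdges

/-- The pairs `(v, s)` with `v` of length `m` and `s|_v` nontrivial, thought of as edges from `v`
to `s(v)` on level `m` that persist on the next levels. -/
def nontrivialEdges (A : Mealy S X) (m : ℕ) : Set (List X × S) :=
  {e | e.1.length = m ∧ ¬A.IsTrivialState (A.sec e.2 e.1)}

/-- A bound, uniform in the level, for the number of nontrivial edges of a bounded automaton with
`n` states over `k` letters. -/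
def edgeBound (n k : ℕ) : ℕ := n * (k ^ n * k ^ n)

theorem finite_nontrivialEdges [Finite S] [Finite X] (m : ℕ) : (A.nontrivialEdges m).Finite :=
  ((List.finite_length_eq X m).prod (Set.toFinite Set.univ)).subset fun _ he => ⟨he.1, trivial⟩

theorem Bounded.ncard_nontrivial_sec_le [Finite S] [Finite X] [Nonempty X] (hA : A.Bounded) (m : ℕ)
    (s : S) : {v | v.length = m ∧ ¬A.IsTrivialState (A.sec s v)}.ncard ≤
      Nat.card X ^ Nat.card S * Nat.card X ^ Nat.card S := by
  have hX : 0 < Nat.card X := Nat.card_pos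
  obtain hm | hm := lt_or_ge m (Nat.card S)
  · calc _ ≤ {v : List X | v.length = m}.ncard :=
          Set.ncard_le_ncard (fun v hv => hv.1) (List.finite_length_eq X m)
      _ = Nat.card X ^ m := ncard_setOf_length_eq X m
      _ ≤ Nat.card X ^ Nat.card S := Nat.pow_le_pow_right hX hm.le
      _ ≤ _ := Nat.le_mul_of_pos_left _ (Nat.pow_pos hX)
  · refine ncard_le_mul_of_subset_biUnion (f := fun v =>
      (v ++ ·) '' {w : List X | w.length = Nat.card S}) (t := {v | v.length = m - Nat.card S ∧
        A.NontrivialAt (Nat.card S) (A.sec s v)}) ?_ ?_ ?_ ?_ ?_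
    · rintro v ⟨rfl, hv⟩
      have hdrop : (v.drop (v.length - Nat.card S)).length = Nat.card S := by simp; omega
      refine Set.mem_biUnion (x := v.take (v.length - Nat.card S)) ⟨by simp, _, hdrop, ?_⟩
        ⟨_, hdrop, List.take_append_drop _ v⟩
      rwa [← sec_append, List.take_append_drop]
    · exact (List.finite_length_eq X _).subset fun v hv => hv.1
    · exact (hA.ncard_nontrivialAt_le _ s).trans
        (Nat.pow_le_pow_right hX (Set.ncard_le_card _))
    · exact fun v _ => (List.finite_length_eq X _).image _
    · exact fun v _ => (Set.ncard_image_le (List.finite_length_eq X _)).trans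
        (ncard_setOf_length_eq X _).le

theorem Bounded.ncard_nontrivialEdges_le [Finite S] [Finite X] [Nonempty X] (hA : A.Bounded)
    (m : ℕ) : (A.nontrivialEdges m).ncard ≤ edgeBound (Nat.card S) (Nat.card X) := by
  have hfin (s : S) : {v | v.length = m ∧ ¬A.IsTrivialState (A.sec s v)}.Finite :=
    (List.finite_length_eq X m).subset fun v hv => hv.1
  refine ncard_le_mul_of_subset_biUnion (t := Set.univ)
    (f := fun s => (·, s) '' {v | v.length = m ∧ ¬A.IsTrivialState (A.sec s v)})
    ?_ Set.finite_univ
    (Set.ncard_univ S).le (fun s _ => (hfin s).image _) fun s _ =>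
      (Set.ncard_image_le (hfin s)).trans (hA.ncard_nontrivial_sec_le m s)
  exact fun ⟨v, s⟩ he => Set.mem_biUnion (Set.mem_univ s) ⟨v, he, rfl⟩

end NontrivialEdges

/-! ### `e`-equivalence classes -/

section EEquiv

theorem equivalence_eEquiv (A : Mealy S X) : Equivalence A.EEquiv :=
  Relation.EqvGen.is_equivalence A.ERel

theorem EEquiv.refl (w : List X) : A.EEquiv w w := (equivalence_eEquiv A).refl w

theorem EEquiv.symm {w w' : List X} (h : A.EEquiv w w') : A.EEquiv w' w :=
  (equivalence_eEquiv A).symm h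

theorem EEquiv.trans {w w' w'' : List X} (h : A.EEquiv w w') (h' : A.EEquiv w' w'') :
    A.EEquiv w w'' := (equivalence_eEquiv A).trans h h'

theorem eEquiv_act {s : S} {w : List X} (h : A.IsTrivialState (A.sec s w)) :
    A.EEquiv w (A.act s w) :=
  .rel _ _ ⟨s, .inl ⟨h, rfl⟩⟩

theorem EEquiv.of_equivalence {R : List X → List X → Prop} (hR : Equivalence R)
    (hact : ∀ s w, A.IsTrivialState (A.sec s w) → R w (A.act s w)) {w w' : List X}
    (h : A.EEquiv w w') : R w w' := by
  refine hR.eqvGen_iff.1 (h.mono ?_)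
  rintro w w' ⟨s, ⟨hs, rfl⟩ | ⟨hs, rfl⟩⟩
  exacts [hact s w hs, hR.symm (hact s w' hs)]

theorem EEquiv.length_eq {w w' : List X} (h : A.EEquiv w w') : w.length = w'.length :=
  h.of_equivalence (eq_equivalence.comap List.length) fun s w _ => (length_act A s w).symm

theorem EEquiv.append {w w' : List X} (h : A.EEquiv w w') (t : List X) :
    A.EEquiv (w ++ t) (w' ++ t) :=
  h.of_equivalence (R := fun w w' => A.EEquiv (w ++ t) (w' ++ t))
    ((equivalence_eEquiv A).comap (· ++ t)) fun s w hs => by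
      have := eEquiv_act (A := A) (s := s) (w := w ++ t) (by rw [sec_append]; exact hs.sec t)
      rwa [act_append, hs t] at this

end EEquiv

section LevelCorr

/-- The two endpoints `e.1` and `e.2(e.1)` of an edge `e`. -/
def endpoint (A : Mealy S X) (e : List X × S) (b : Bool) : List X :=
  bif b then A.act e.2 e.1 else e.1

theorem length_endpoint (e : List X × S) (b : Bool) : (A.endpoint e b).length = e.1.length := by
  cases b
  exacts [rfl, length_act A e.2 e.1]

theorem endpoint_append (v t : List X) (s : S) (b : Bool) :
    A.endpoint (v ++ t, s) b = A.endpoint (v, s) b ++ A.endpoint (t, A.sec s v) b := by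
  cases b
  exacts [rfl, act_append A s v t]

theorem eEquiv_endpoint {e : List X × S} (he : A.IsTrivialState (A.sec e.2 e.1)) (b b' : Bool) :
    A.EEquiv (A.endpoint e b) (A.endpoint e b') := by
  cases b <;> cases b'
  exacts [.refl _, eEquiv_act he, (eEquiv_act he).symm, .refl _]

theorem exists_append_of_mem_nontrivialEdges {i r : ℕ} {e : List X × S}
    (he : e ∈ A.nontrivialEdges (i + r)) :
    ∃ v t s, e = (v ++ t, s) ∧ t.length = r ∧ (v, s) ∈ A.nontrivialEdges i := by
  obtain ⟨w, s⟩ := e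
  obtain ⟨hlen, hw⟩ := he
  simp only at hlen hw
  refine ⟨w.take i, w.drop i, s, by rw [List.take_append_drop], by simp [hlen],
    by simp [hlen], fun ht => hw ?_⟩
  rw [← List.take_append_drop i w, sec_append]
  exact ht.sec _

/-- A correspondence between the nontrivial edges of the levels `i` and `j` that preserves
sections and `e`-equivalence of endpoints. -/
structure LevelCorr (A : Mealy S X) (i j : ℕ) (Φ : List X × S → List X × S → Prop) : Prop where
  left {e f} : Φ e f → e ∈ A.nontrivialEdges i
  right {e f} : Φ e f → f ∈ A.nontrivialEdges j
  sec_eq {e f} : Φ e f → A.sec e.2 e.1 = A.sec f.2 f.1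
  left_total {e} : e ∈ A.nontrivialEdges i → ∃ f, Φ e f
  right_total {f} : f ∈ A.nontrivialEdges j → ∃ e, Φ e f
  eEquiv_iff {e f e' f'} (b b' : Bool) : Φ e f → Φ e' f' →
    (A.EEquiv (A.endpoint e b) (A.endpoint e' b') ↔
      A.EEquiv (A.endpoint f b) (A.endpoint f' b'))

variable {i j r : ℕ} {Φ : List X × S → List X × S → Prop}

theorem LevelCorr.symm (hΦ : A.LevelCorr i j Φ) : A.LevelCorr j i (Function.swap Φ) where
  left h := hΦ.right h
  right h := hΦ.left h
  sec_eq h := (hΦ.sec_eq h).symm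
  left_total := hΦ.right_total
  right_total := hΦ.left_total
  eEquiv_iff b b' h h' := (hΦ.eEquiv_iff b b' h h').symm

theorem LevelCorr.refl (A : Mealy S X) (i : ℕ) :
    A.LevelCorr i i fun e f => e = f ∧ e ∈ A.nontrivialEdges i where
  left h := h.2
  right h := h.1 ▸ h.2
  sec_eq h := h.1 ▸ rfl
  left_total he := ⟨_, rfl, he⟩
  right_total he := ⟨_, rfl, he⟩
  eEquiv_iff b b' h h' := by rw [h.1, h'.1]

/-- The words `w` and `w'`, cut after `i` letters, are related either trivially or through
nontrivial edges of level `i` whose `Φ`-partners carry the same suffixes. For a correspondence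
`Φ` on level `i`, this is an equivalence relation coarser than `e`-equivalence. -/
def Splits (A : Mealy S X) (i : ℕ) (Φ : List X × S → List X × S → Prop) (w w' : List X) : Prop :=
  (A.EEquiv (w.take i) (w'.take i) ∧ w.drop i = w'.drop i) ∨
    ∃ e f b e' f' b', Φ e f ∧ Φ e' f' ∧
      A.EEquiv (w.take i) (A.endpoint e b) ∧ A.EEquiv (w'.take i) (A.endpoint e' b') ∧
      A.EEquiv (A.endpoint f b ++ w.drop i) (A.endpoint f' b' ++ w'.drop i)

theorem LevelCorr.equivalence_splits (hΦ : A.LevelCorr i j Φ) :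
    Equivalence (A.Splits i Φ) where
  refl w := .inl ⟨.refl _, rfl⟩
  symm := by
    rintro w w' (⟨h, ht⟩ | ⟨e, f, b, e', f', b', hef, hef', he, he', h⟩)
    · exact .inl ⟨h.symm, ht.symm⟩
    · exact .inr ⟨e', f', b', e, f, b, hef', hef, he', he, h.symm⟩
  trans := by
    rintro w w' w'' (⟨h, ht⟩ | ⟨e, f, b, e', f', b', hef, hef', he, he', h⟩)
      (⟨k, kt⟩ | ⟨g, h', c, g', h'', c', hgh, hgh', hg, hg', k⟩)
    · exact .inl ⟨h.trans k, ht.trans kt⟩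
    · exact .inr ⟨g, h', c, g', h'', c', hgh, hgh', h.trans hg, hg', ht ▸ k⟩
    · exact .inr ⟨e, f, b, e', f', b', hef, hef', he, k.symm.trans he', kt ▸ h⟩
    · have hmid := (hΦ.eEquiv_iff b' c hef' hgh).1 (he'.symm.trans hg)
      exact .inr ⟨e, f, b, g', h'', c', hef, hgh', he, hg', h.trans ((hmid.append _).trans k)⟩

theorem LevelCorr.splits_act (hΦ : A.LevelCorr i j Φ) {s : S} {w : List X}
    (hw : A.IsTrivialState (A.sec s w)) : A.Splits i Φ w (A.act s w) := by
  have hact : A.act s w = A.act s (w.take i) ++ A.act (A.sec s (w.take i)) (w.drop i) := by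
    rw [← act_append, List.take_append_drop]
  have hsec : A.sec s w = A.sec (A.sec s (w.take i)) (w.drop i) := by
    rw [← sec_append, List.take_append_drop]
  have htake : (A.act s w).take i = A.act s (w.take i) := by
    rcases le_total w.length i with h | h
    · rw [List.take_of_length_le h, List.take_of_length_le (by simpa using h)]
    · rw [hact, List.take_left' (by simpa using h)]
  have hdrop : (A.act s w).drop i = A.act (A.sec s (w.take i)) (w.drop i) :=
    List.append_cancel_left ((htake ▸ List.take_append_drop i _).trans hact)
  by_cases htriv : A.IsTrivialState (A.sec s (w.take i))
  · exact .inl ⟨htake ▸ eEquiv_act htriv, hdrop ▸ (htriv _).symm⟩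
  · have hi : (w.take i).length = i := by
      refine List.length_take_of_le (le_of_not_gt fun h => htriv ?_)
      rwa [List.take_of_length_le h.le]
    obtain ⟨f, hf⟩ := hΦ.left_total (e := (w.take i, s)) ⟨hi, htriv⟩
    refine .inr ⟨_, f, false, _, f, true, hf, hf, .refl _, htake ▸ .refl _, ?_⟩
    have hfsec : A.sec f.2 f.1 = A.sec s (w.take i) := (hΦ.sec_eq hf).symm
    have := eEquiv_endpoint (A := A) (e := (f.1 ++ w.drop i, f.2))
      (by rwa [sec_append, hfsec, ← hsec]) false true
    rw [endpoint_append, endpoint_append, hfsec] at this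
    exact hdrop ▸ this

theorem LevelCorr.splits (hΦ : A.LevelCorr i j Φ) {w w' t t' : List X} (hw : w.length = i)
    (h : A.EEquiv (w ++ t) (w' ++ t')) (hw' : w'.length = i) :
    (A.EEquiv w w' ∧ t = t') ∨
      ∃ e f b e' f' b', Φ e f ∧ Φ e' f' ∧ A.EEquiv w (A.endpoint e b) ∧
        A.EEquiv w' (A.endpoint e' b') ∧
        A.EEquiv (A.endpoint f b ++ t) (A.endpoint f' b' ++ t') := by
  have := h.of_equivalence hΦ.equivalence_splits fun s w hs => hΦ.splits_act hs
  rwa [Splits, List.take_left' hw, List.take_left' hw', List.drop_left' hw,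
    List.drop_left' hw'] at this

theorem LevelCorr.transport (hΦ : A.LevelCorr i j Φ) {e f e' f' : List X × S} {b b' : Bool}
    {t t' : List X} (hef : Φ e f) (hef' : Φ e' f')
    (h : A.EEquiv (A.endpoint e b ++ t) (A.endpoint e' b' ++ t')) :
    A.EEquiv (A.endpoint f b ++ t) (A.endpoint f' b' ++ t') := by
  have hlen {e f : List X × S} (hef : Φ e f) (b : Bool) : (A.endpoint e b).length = i :=
    (length_endpoint e b).trans (hΦ.left hef).1
  rcases hΦ.splits (hlen hef b) h (hlen hef' b') with
    ⟨hee, rfl⟩ | ⟨g, k, c, g', k', c', hgk, hgk', hg, hg', hk⟩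
  · exact ((hΦ.eEquiv_iff _ _ hef hef').1 hee).append t
  · exact (((hΦ.eEquiv_iff _ _ hef hgk).1 hg).append t).trans
      (hk.trans (((hΦ.eEquiv_iff _ _ hef' hgk').1 hg').symm.append t'))

/-- The relation on edges obtained from `Φ` by appending a common word of length `r`, as long as
the section stays nontrivial. -/
def extendCorr (A : Mealy S X) (r : ℕ) (Φ : List X × S → List X × S → Prop) :
    List X × S → List X × S → Prop := fun e' f' =>
  ∃ e f t, Φ e f ∧ t.length = r ∧ ¬A.IsTrivialState (A.sec (A.sec e.2 e.1) t) ∧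
    e' = (e.1 ++ t, e.2) ∧ f' = (f.1 ++ t, f.2)

theorem LevelCorr.extendCorr (hΦ : A.LevelCorr i j Φ) (r : ℕ) :
    A.LevelCorr (i + r) (j + r) (A.extendCorr r Φ) where
  left := by
    rintro _ _ ⟨e, f, t, hef, rfl, ht, rfl, rfl⟩
    exact ⟨by simp [(hΦ.left hef).1], by rwa [sec_append]⟩
  right := by
    rintro _ _ ⟨e, f, t, hef, rfl, ht, rfl, rfl⟩
    exact ⟨by simp [(hΦ.right hef).1], by rwa [sec_append, ← hΦ.sec_eq hef]⟩
  sec_eq := by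
    rintro _ _ ⟨e, f, t, hef, -, -, rfl, rfl⟩
    rw [sec_append, sec_append, hΦ.sec_eq hef]
  left_total := by
    intro e he
    obtain ⟨v, t, s, rfl, ht, hvs⟩ := exists_append_of_mem_nontrivialEdges he
    obtain ⟨f, hf⟩ := hΦ.left_total hvs
    exact ⟨_, _, f, t, hf, ht, by rw [← sec_append]; exact he.2, rfl, rfl⟩
  right_total := by
    intro f hf
    obtain ⟨v, t, s, rfl, ht, hvs⟩ := exists_append_of_mem_nontrivialEdges hf
    obtain ⟨e, he⟩ := hΦ.right_total hvs
    exact ⟨_, e, _, t, he, ht, by rw [hΦ.sec_eq he, ← sec_append]; exact hf.2, rfl, rfl⟩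
  eEquiv_iff := by
    rintro _ _ _ _ b b' ⟨e, f, t, hef, -, -, rfl, rfl⟩ ⟨e', f', t', hef', -, -, rfl, rfl⟩
    simp only [endpoint_append, ← hΦ.sec_eq hef, ← hΦ.sec_eq hef']
    exact ⟨hΦ.transport hef hef', hΦ.symm.transport hef hef'⟩

end LevelCorr

section Merging

/-- A word is active if it is `e`-equivalent to an endpoint of a nontrivial edge. -/
def Active (A : Mealy S X) (w : List X) : Prop :=
  ∃ e ∈ A.nontrivialEdges w.length, ∃ b, A.EEquiv w (A.endpoint e b)

/-- Appending `x` to `w` merges `e`-classes: the class of `wx` is not just the class of `w`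
with `x` appended. -/
def Merges (A : Mealy S X) (w : List X) (x : X) : Prop :=
  ∃ u y, A.EEquiv (u ++ [y]) (w ++ [x]) ∧ ¬(A.EEquiv u w ∧ y = x)

/-- Two words are linked if they touch corresponding edges of a correspondence between their
levels; they then behave alike under appending letters. -/
def Linked (A : Mealy S X) (w w' : List X) : Prop :=
  ∃ Φ, A.LevelCorr w.length w'.length Φ ∧
    ∃ e f b, Φ e f ∧ A.EEquiv w (A.endpoint e b) ∧ A.EEquiv w' (A.endpoint f b)

theorem EEquiv.length_eq_of_append {u w t t' : List X} (h : A.EEquiv (u ++ t) (w ++ t'))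
    (ht : t.length = t'.length) : u.length = w.length := by
  simpa [ht] using h.length_eq

theorem EEquiv.eq_or_active {w w' t t' : List X} (h : A.EEquiv (w ++ t) (w' ++ t'))
    (ht : t.length = t'.length) : (A.EEquiv w w' ∧ t = t') ∨ (A.Active w ∧ A.Active w') := by
  have hlen := h.length_eq_of_append ht
  refine ((LevelCorr.refl A w.length).splits rfl h hlen.symm).imp_right ?_
  rintro ⟨e, f, b, e', f', b', he, he', hwe, hwe', -⟩
  exact ⟨⟨e, he.2, b, hwe⟩, ⟨e', hlen ▸ he'.2, b', hwe'⟩⟩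

theorem Merges.active {w : List X} {x : X} (h : A.Merges w x) : A.Active w :=
  let ⟨_, _, heq, hne⟩ := h
  ((heq.eq_or_active rfl).resolve_left fun h => hne ⟨h.1, List.singleton_inj.1 h.2⟩).2

theorem Merges.of_eEquiv {w u : List X} {x y : X} (h : A.Merges w x)
    (hu : A.EEquiv (u ++ [y]) (w ++ [x])) : A.Merges u y := by
  by_cases hc : A.EEquiv u w ∧ y = x
  · obtain ⟨v, z, heq, hne⟩ := h
    exact ⟨v, z, heq.trans hu.symm, fun h' => hne ⟨h'.1.trans hc.1, h'.2.trans hc.2⟩⟩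
  · exact ⟨w, x, hu.symm, fun h' => hc ⟨h'.1.symm, h'.2.symm⟩⟩

theorem Linked.active {w w' : List X} (h : A.Linked w w') : A.Active w' :=
  let ⟨_, hΦ, _, f, b, hef, _, hf⟩ := h
  ⟨f, hΦ.right hef, b, hf⟩

theorem Linked.merges {w w' : List X} {x : X} (h : A.Linked w w') (hm : A.Merges w x) :
    A.Merges w' x := by
  obtain ⟨Φ, hΦ, e, f, b, hef, hwe, hwf⟩ := h
  obtain ⟨u, y, hu, hne⟩ := hm
  obtain ⟨⟨e', he', b', hue⟩, -⟩ := (hu.eq_or_active rfl).resolve_left fun h =>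
    hne ⟨h.1, List.singleton_inj.1 h.2⟩
  rw [hu.length_eq_of_append rfl] at he'
  obtain ⟨f', hef'⟩ := hΦ.left_total he'
  have hee : A.EEquiv (A.endpoint e' b' ++ [y]) (A.endpoint e b ++ [x]) :=
    (hue.symm.append _).trans (hu.trans (hwe.append _))
  refine ⟨A.endpoint f' b', y, (hΦ.transport hef' hef hee).trans (hwf.symm.append _),
    fun hc => hne ⟨?_, hc.2⟩⟩
  have : A.EEquiv (A.endpoint e' b') (A.endpoint e b) :=
    (hΦ.eEquiv_iff b' b hef' hef).2 (hc.1.trans hwf)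
  exact hue.trans (this.trans hwe.symm)

theorem Linked.append {w w' t : List X} (h : A.Linked w w') (ht : A.Active (w ++ t)) :
    A.Linked (w ++ t) (w' ++ t) := by
  obtain ⟨Φ, hΦ, e, f, b, hef, hwe, hwf⟩ := h
  obtain ⟨e', he', b', hte⟩ := ht
  have he'' := he'
  rw [List.length_append] at he''
  obtain ⟨v, t', s, rfl, ht', hvs⟩ := exists_append_of_mem_nontrivialEdges he''
  obtain ⟨f', hef'⟩ := hΦ.left_total hvs
  refine ⟨A.extendCorr t.length Φ, by simpa only [List.length_append] using hΦ.extendCorr t.length,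
    _, (f'.1 ++ t', f'.2), b', ⟨(v, s), f', t', hef', ht', ?_, rfl, rfl⟩, hte, ?_⟩
  · rw [← sec_append]
    exact he'.2
  · rw [endpoint_append] at hte ⊢
    rw [← hΦ.sec_eq hef']
    exact (hwf.append t).trans (hΦ.transport hef hef' ((hwe.symm.append t).trans hte))

/-- The `e`-equivalence class of `w`. -/
def eClass (A : Mealy S X) (w : List X) : Set (List X) := {u | A.EEquiv u w}

theorem finite_eClass [Finite X] (w : List X) : (A.eClass w).Finite :=
  (List.finite_length_eq X w.length).subset fun _ hu => hu.length_eq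

theorem image_append_eClass_subset (w t : List X) : (· ++ t) '' A.eClass w ⊆ A.eClass (w ++ t) :=
  Set.image_subset_iff.2 fun _ hu => hu.append t

theorem ncard_image_append_eClass (w t : List X) :
    ((· ++ t) '' A.eClass w).ncard = (A.eClass w).ncard :=
  Set.ncard_image_of_injective _ (List.append_left_injective t)

theorem ncard_eClass_le_append [Finite X] (w t : List X) :
    (A.eClass w).ncard ≤ (A.eClass (w ++ t)).ncard :=
  ncard_image_append_eClass w t ▸
    Set.ncard_le_ncard (image_append_eClass_subset w t) (finite_eClass _)

theorem Merges.ncard_eClass_lt [Finite X] {w : List X} {x : X} (h : A.Merges w x) :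
    (A.eClass w).ncard < (A.eClass (w ++ [x])).ncard := by
  rw [← ncard_image_append_eClass w [x]]
  refine Set.ncard_lt_ncard ⟨image_append_eClass_subset w [x], fun hsub => ?_⟩ (finite_eClass _)
  obtain ⟨u, y, heq, hne⟩ := h
  obtain ⟨v, hv, hvu⟩ := hsub heq
  obtain ⟨rfl, hxy⟩ := List.append_inj' hvu rfl
  exact hne ⟨hv, (List.singleton_inj.1 hxy).symm⟩

theorem eClass_append_subset_of_not_merges {w : List X} {x : X} (h : ¬A.Merges w x) :
    A.eClass (w ++ [x]) ⊆ (· ++ [x]) '' A.eClass w := by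
  intro v hv
  obtain rfl | ⟨u, y, rfl⟩ := List.eq_nil_or_concat' v
  · simpa using EEquiv.length_eq hv
  · obtain ⟨hu, rfl⟩ : A.EEquiv u w ∧ y = x := not_not.1 fun hne => h ⟨u, y, hv, hne⟩
    exact ⟨u, hu, rfl⟩

/-- The link lets the merging step at `p` be repeated at `p x u`, `p x u x u`, and so on. -/
theorem Linked.exists_le_ncard_eClass [Finite X] {p : List X} {x : X} {u : List X}
    (hp : A.Linked p (p ++ x :: u)) (hm : A.Merges p x) (K : ℕ) :
    ∃ w, K ≤ (A.eClass w).ncard := by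
  obtain ⟨w, -, -, hw⟩ : ∃ w, A.Linked w (w ++ x :: u) ∧ A.Merges w x ∧
      K ≤ (A.eClass w).ncard := by
    induction K with
    | zero => exact ⟨p, hp, hm, Nat.zero_le _⟩
    | succ K ih =>
      obtain ⟨w, hw, hwm, hK⟩ := ih
      refine ⟨w ++ x :: u, hw.append hw.active, hw.merges hwm, ?_⟩
      calc K + 1 ≤ (A.eClass (w ++ [x])).ncard := hK.trans_lt hwm.ncard_eClass_lt
        _ ≤ (A.eClass (w ++ [x] ++ u)).ncard := ncard_eClass_le_append _ u
        _ = (A.eClass (w ++ x :: u)).ncard := by rw [List.append_assoc, List.singleton_append]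
  exact ⟨w, hw⟩

end Merging

section Profile

/-- The combinatorial data attached to a word by a labelling of the nontrivial edges by `Fin N`:
the section of each edge, the `e`-equivalent pairs of endpoints, and the endpoints
`e`-equivalent to the word. -/
abbrev Profile (S : Type*) (N : ℕ) : Type _ :=
  Set (Fin N × S) × Set ((Fin N × Bool) × (Fin N × Bool)) × Set (Fin N × Bool)

variable {N : ℕ} {ι : ℕ → List X × S → Fin N}

/-- The profile of the word `w` for the labelling `ι m` of the nontrivial edges of level `m`. -/
def profile (A : Mealy S X) (ι : ℕ → List X × S → Fin N) (w : List X) : Profile S N :=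
  ({a | ∃ e ∈ A.nontrivialEdges w.length, (ι w.length e, A.sec e.2 e.1) = a},
    {a | ∃ e ∈ A.nontrivialEdges w.length, ∃ e' ∈ A.nontrivialEdges w.length, ∃ b b',
      A.EEquiv (A.endpoint e b) (A.endpoint e' b') ∧
        ((ι w.length e, b), (ι w.length e', b')) = a},
    {a | ∃ e ∈ A.nontrivialEdges w.length, ∃ b,
      A.EEquiv w (A.endpoint e b) ∧ (ι w.length e, b) = a})

theorem levelCorr_of_profile_eq (hι : ∀ m, Set.InjOn (ι m) (A.nontrivialEdges m)) {w w' : List X}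
    (h : A.profile ι w = A.profile ι w') :
    A.LevelCorr w.length w'.length fun e f => e ∈ A.nontrivialEdges w.length ∧
      f ∈ A.nontrivialEdges w'.length ∧ ι w.length e = ι w'.length f := by
  simp only [profile, Prod.mk.injEq, Set.ext_iff, Set.mem_ofPred_eq, Prod.forall] at h
  obtain ⟨hsec, hends, -⟩ := h
  refine ⟨fun h => h.1, fun h => h.2.1, ?_, ?_, ?_, ?_⟩
  · rintro e f ⟨he, hf, hef⟩
    obtain ⟨g, hg, hgf, hge⟩ := (hsec _ _).1 ⟨e, he, rfl, rfl⟩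
    rw [← hge, hι _ hg hf (hgf.trans hef)]
  · intro e he
    obtain ⟨f, hf, hfe, -⟩ := (hsec _ _).1 ⟨e, he, rfl, rfl⟩
    exact ⟨f, he, hf, hfe.symm⟩
  · intro f hf
    obtain ⟨e, he, hef, -⟩ := (hsec _ _).2 ⟨f, hf, rfl, rfl⟩
    exact ⟨e, he, hf, hef⟩
  · rintro e f e' f' b b' ⟨he, hf, hef⟩ ⟨he', hf', hef'⟩
    constructor <;> intro h
    · obtain ⟨g, hg, g', hg', c, c', hgg, ⟨hgf, rfl⟩, hgf', rfl⟩ :=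
        (hends _ b _ b').1 ⟨e, he, e', he', b, b', h, ⟨rfl, rfl⟩, rfl, rfl⟩
      rwa [hι _ hg hf (hgf.trans hef), hι _ hg' hf' (hgf'.trans hef')] at hgg
    · obtain ⟨g, hg, g', hg', c, c', hgg, ⟨hge, rfl⟩, hge', rfl⟩ :=
        (hends _ b _ b').2 ⟨f, hf, f', hf', b, b', h, ⟨rfl, rfl⟩, rfl, rfl⟩
      rwa [hι _ hg he (hge.trans hef.symm), hι _ hg' he' (hge'.trans hef'.symm)] at hgg

theorem linked_of_profile_eq (hι : ∀ m, Set.InjOn (ι m) (A.nontrivialEdges m)) {w w' : List X}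
    (hw : A.Active w) (h : A.profile ι w = A.profile ι w') : A.Linked w w' := by
  obtain ⟨e, he, b, hwe⟩ := hw
  have hmem : (ι w.length e, b) ∈ (A.profile ι w).2.2 := ⟨e, he, b, hwe, rfl⟩
  rw [h] at hmem
  obtain ⟨f, hf, c, hwf, heq⟩ := hmem
  obtain ⟨hfe, rfl⟩ := Prod.mk_inj.1 heq
  exact ⟨_, levelCorr_of_profile_eq hι h, e, f, c, ⟨he, hf, hfe.symm⟩, hwe, hwf⟩

end Profile

section MergingPrefixes

/-- The proper prefixes of `v` at which the next letter of `v` merges `e`-classes. -/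
def mergingPrefixes (A : Mealy S X) (v : List X) : Set (List X) :=
  {p | ∃ x q, v = p ++ x :: q ∧ A.Merges p x}

theorem finite_mergingPrefixes (v : List X) : (A.mergingPrefixes v).Finite := by
  refine (List.finite_toSet v.inits).subset ?_
  rintro p ⟨x, q, rfl, -⟩
  simp

theorem mergingPrefixes_subset_append (v t : List X) :
    A.mergingPrefixes v ⊆ A.mergingPrefixes (v ++ t) := by
  rintro p ⟨x, q, rfl, h⟩
  exact ⟨x, q ++ t, by simp, h⟩

theorem Merges.ncard_mergingPrefixes_lt {v : List X} {x : X} (h : A.Merges v x) :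
    (A.mergingPrefixes v).ncard < (A.mergingPrefixes (v ++ [x])).ncard := by
  refine Set.ncard_lt_ncard ⟨mergingPrefixes_subset_append v [x], fun hsub => ?_⟩
    (finite_mergingPrefixes _)
  obtain ⟨y, q, hv, -⟩ := hsub ⟨x, [], rfl, h⟩
  simpa using congrArg List.length hv

theorem injOn_profile_mergingPrefixes [Finite X] {N K : ℕ} {ι : ℕ → List X × S → Fin N}
    (hι : ∀ m, Set.InjOn (ι m) (A.nontrivialEdges m)) (hK : ∀ w, (A.eClass w).ncard ≤ K)
    (v : List X) : Set.InjOn (A.profile ι) (A.mergingPrefixes v) := by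
  have hinj : ∀ p ∈ A.mergingPrefixes v, ∀ p' ∈ A.mergingPrefixes v,
      A.profile ι p = A.profile ι p' → p.length ≤ p'.length → p = p' := by
    rintro p ⟨x, q, hv, hm⟩ p' ⟨x', q', hv', -⟩ hpp hle
    obtain ⟨u, rfl⟩ : p <+: p' :=
      List.prefix_of_prefix_length_le ⟨x :: q, hv.symm⟩ ⟨x' :: q', hv'.symm⟩ hle
    cases u with
    | nil => rw [List.append_nil]
    | cons y u =>
      obtain ⟨rfl, -⟩ : x = y ∧ _ := by
        simpa [hv] using hv'
      obtain ⟨w, hw⟩ := (linked_of_profile_eq hι hm.active hpp).exists_le_ncard_eClass hm (K + 1)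
      exact absurd (hK w) (by omega)
  intro p hp p' hp' hpp
  rcases le_total p.length p'.length with h | h
  · exact hinj p hp p' hp' hpp h
  · exact (hinj p' hp' p hp hpp.symm h).symm

theorem ncard_mergingPrefixes_le [Finite S] [Finite X] {N K : ℕ}
    (hN : ∀ m, (A.nontrivialEdges m).ncard ≤ N) (hK : ∀ w, (A.eClass w).ncard ≤ K) (v : List X) :
    (A.mergingPrefixes v).ncard ≤ Nat.card (Profile S (N + 1)) := by
  have hlabel (m : ℕ) : ∃ f : List X × S → Fin (N + 1), Set.InjOn f (A.nontrivialEdges m) := by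
    obtain ⟨f, -, hf⟩ := (finite_nontrivialEdges (A := A) m).exists_injOn_of_encard_le
      (t := (Set.univ : Set (Fin (N + 1)))) (by
        rw [← (finite_nontrivialEdges m).cast_ncard_eq, Set.encard_univ, ENat.card_eq_coe_natCard,
          Nat.card_fin]
        exact_mod_cast (hN m).trans N.le_succ)
    exact ⟨f, hf⟩
  choose ι hι using hlabel
  rw [← (injOn_profile_mergingPrefixes hι hK v).ncard_image]
  exact Set.ncard_le_card _

end MergingPrefixes

section ClassSize

theorem ncard_nontrivialEdges_prod_le {N m : ℕ}
    (hN : (A.nontrivialEdges m).ncard ≤ N) (α : Type*) :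
    (A.nontrivialEdges m ×ˢ (Set.univ : Set α)).ncard ≤ N * Nat.card α := by
  rw [Set.ncard_prod, Set.ncard_univ]
  exact Nat.mul_le_mul_right _ hN

theorem Merges.ncard_eClass_append_le [Finite S] [Finite X] {N K : ℕ} {v : List X} {x : X}
    (hm : A.Merges v x) (hN : (A.nontrivialEdges v.length).ncard ≤ N)
    (hK : ∀ u y, A.EEquiv (u ++ [y]) (v ++ [x]) → (A.eClass u).ncard ≤ K) :
    (A.eClass (v ++ [x])).ncard ≤ N * (2 * Nat.card X) * K := by
  let T : Set ((List X × S) × Bool × X) :=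
    {a ∈ A.nontrivialEdges v.length ×ˢ Set.univ |
      A.EEquiv (A.endpoint a.1 a.2.1 ++ [a.2.2]) (v ++ [x])}
  have hfin : (A.nontrivialEdges v.length ×ˢ (Set.univ : Set (Bool × X))).Finite :=
    (finite_nontrivialEdges _).prod Set.finite_univ
  refine ncard_le_mul_of_subset_biUnion (t := T)
    (f := fun a => (· ++ [a.2.2]) '' A.eClass (A.endpoint a.1 a.2.1)) ?_
    (hfin.subset (Set.sep_subset _ _)) ?_ (fun _ _ => (finite_eClass _).image _)
    fun a ha => (ncard_image_append_eClass _ _).trans_le (hK _ _ ha.2)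
  · intro w hw
    obtain rfl | ⟨u, y, rfl⟩ := List.eq_nil_or_concat' w
    · simpa using EEquiv.length_eq hw
    · obtain ⟨e, he, b, hue⟩ := (hm.of_eEquiv hw).active
      rw [EEquiv.length_eq_of_append hw rfl] at he
      exact Set.mem_biUnion (x := (e, b, y)) ⟨⟨he, trivial⟩, (hue.symm.append _).trans hw⟩
        ⟨u, hue, rfl⟩
  · refine (Set.ncard_le_ncard (Set.sep_subset _ _) hfin).trans
      ((ncard_nontrivialEdges_prod_le hN _).trans_eq ?_)
    rw [Nat.card_prod, Nat.card_eq_fintype_card (α := Bool), Fintype.card_bool]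

theorem ncard_eClass_le [Finite S] [Finite X] {N b : ℕ}
    (hN : ∀ m, (A.nontrivialEdges m).ncard ≤ N) {v : List X}
    (hb : ∀ u, A.EEquiv u v → (A.mergingPrefixes u).ncard ≤ b) :
    (A.eClass v).ncard ≤ (N * (2 * Nat.card X) + 1) ^ b := by
  induction hm : v.length generalizing b v with
  | zero =>
    obtain rfl := List.eq_nil_of_length_eq_zero hm
    calc _ ≤ ({[]} : Set (List X)).ncard :=
          Set.ncard_le_ncard fun u hu => List.eq_nil_of_length_eq_zero hu.length_eq
      _ ≤ _ := by rw [Set.ncard_singleton]; exact Nat.pow_pos (Nat.succ_pos _)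
  | succ m ih =>
    obtain rfl | ⟨v, x, rfl⟩ := List.eq_nil_or_concat' v
    · cases hm
    obtain rfl : v.length = m := by simpa using hm
    by_cases hvx : A.Merges v x
    · obtain ⟨b, rfl⟩ := Nat.exists_eq_add_one.2
        (Nat.zero_lt_of_lt (hvx.ncard_mergingPrefixes_lt.trans_le (hb _ (.refl _))))
      refine (hvx.ncard_eClass_append_le (hN _) fun u y huy => ih (b := b) (fun w hw => ?_)
        (huy.length_eq_of_append rfl)).trans ?_
      · have hwy := (hw.append [y]).trans huy
        exact Nat.le_of_lt_succ
          ((hvx.of_eEquiv hwy).ncard_mergingPrefixes_lt.trans_le (hb _ hwy))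
      · rw [pow_succ']
        exact Nat.mul_le_mul_right _ (Nat.le_succ _)
    · refine (Set.ncard_le_ncard (eClass_append_subset_of_not_merges hvx)
        ((finite_eClass v).image _)).trans ((ncard_image_append_eClass v [x]).trans_le
          (ih (fun u hu => ?_) rfl))
      exact (Set.ncard_le_ncard (mergingPrefixes_subset_append u [x])
        (finite_mergingPrefixes _)).trans (hb _ (hu.append [x]))

end ClassSize

/-! ### The finiteness criterion -/

section StateWords

/-- The automaton whose states are the words of states of `A`: the word `s₁…sₙ` acts as the
composition `s₁ ∘ ⋯ ∘ sₙ`. -/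
def words (A : Mealy S X) : Mealy (List S) X where
  step g x := g.foldr (fun s p => ((A.step s p.1).1, (A.step s p.1).2 :: p.2)) (x, [])

theorem words_act_nil (A : Mealy S X) (v : List X) : A.words.act [] v = v := by
  induction v with
  | nil => rfl
  | cons x v ih => exact congrArg _ ih

theorem words_act_cons (A : Mealy S X) (s : S) (g : List S) (v : List X) :
    A.words.act (s :: g) v = A.act s (A.words.act g v) := by
  induction v generalizing s g with
  | nil => rfl
  | cons x v ih => exact congrArg _ (ih _ _)

theorem words_act_eq_foldr (A : Mealy S X) (g : List S) (v : List X) :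
    A.words.act g v = g.foldr A.act v := by
  induction g with
  | nil => exact words_act_nil A v
  | cons s g ih => rw [words_act_cons, ih, List.foldr_cons]

theorem words_act_append (A : Mealy S X) (g h : List S) (v : List X) :
    A.words.act (g ++ h) v = A.words.act g (A.words.act h v) := by
  simp only [words_act_eq_foldr, List.foldr_append]

theorem length_words_sec (A : Mealy S X) (g : List S) (v : List X) :
    (A.words.sec g v).length = g.length := by
  have hstep (g : List S) (x : X) : (A.words.step g x).2.length = g.length := by
    induction g with
    | nil => rfl
    | cons _ g ih => exact congrArg (· + 1) ih
  induction v generalizing g with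
  | nil => rfl
  | cons x v ih => exact (ih _).trans (hstep g x)

end StateWords

section ForwardOrbits

theorem finite_range_words_act [Finite X] (A : Mealy S X) (v : List X) :
    (Set.range fun g => A.words.act g v).Finite :=
  (List.finite_length_eq X v.length).subset
    (Set.range_subset_iff.2 fun g => length_act A.words g v)

/-- Along the orbit of `v` every generator either stays in the current `e`-equivalence class or
moves to an endpoint of a nontrivial edge. -/
theorem ncard_range_words_act_le [Finite S] [Finite X] {N K : ℕ}
    (hN : ∀ m, (A.nontrivialEdges m).ncard ≤ N) (hK : ∀ w, (A.eClass w).ncard ≤ K) (v : List X) :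
    (Set.range fun g => A.words.act g v).ncard ≤ (N * 2 + 1) * K := by
  let E : Set ((List X × S) × Bool) := A.nontrivialEdges v.length ×ˢ Set.univ
  have hE : E.Finite := (finite_nontrivialEdges _).prod Set.finite_univ
  let T : Set (List X) := insert v ((fun a => A.endpoint a.1 a.2) '' E)
  have hT : T.ncard ≤ N * 2 + 1 := by
    refine (Set.ncard_insert_le _ _).trans (Nat.succ_le_succ ((Set.ncard_image_le hE).trans
      ((ncard_nontrivialEdges_prod_le (hN _) _).trans_eq ?_)))
    rw [Nat.card_eq_fintype_card, Fintype.card_bool]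
  refine ncard_le_mul_of_subset_biUnion (f := A.eClass) ?_ ((hE.image _).insert v) hT
    (fun w _ => finite_eClass w) fun w _ => hK w
  rintro _ ⟨g, rfl⟩
  simp only [Set.mem_iUnion, exists_prop]
  induction g with
  | nil => exact ⟨v, Set.mem_insert v _, by rw [words_act_nil]; exact .refl v⟩
  | cons s g ih =>
    rw [words_act_cons]
    by_cases hs : A.IsTrivialState (A.sec s (A.words.act g v))
    · obtain ⟨u, hu, hgu⟩ := ih
      exact ⟨u, hu, (eEquiv_act hs).symm.trans hgu⟩
    · exact ⟨_, Set.mem_insert_of_mem v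
        ⟨((A.words.act g v, s), true), ⟨⟨length_act A.words g v, hs⟩, trivial⟩, rfl⟩, .refl _⟩

end ForwardOrbits

section Invertible

theorem Invertible.bijective_act (hA : A.Invertible) (s : S) : Function.Bijective (A.act s) := by
  constructor
  · intro v
    induction v generalizing s with
    | nil =>
      rintro (_ | _) h
      exacts [rfl, nomatch h]
    | cons x v ih =>
      rintro (_ | ⟨y, u⟩) h
      · cases h
      · obtain ⟨hxy, hvu⟩ := List.cons.inj h
        obtain rfl := (hA s).1 hxy
        rw [ih _ hvu]
  · intro v
    induction v generalizing s with
    | nil => exact ⟨[], rfl⟩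
    | cons x v ih =>
      obtain ⟨y, rfl⟩ := (hA s).2 x
      obtain ⟨u, rfl⟩ := ih (A.step s y).2
      exact ⟨y :: u, rfl⟩

theorem Invertible.exists_mem_autGroup_of_eEquiv (hA : A.Invertible) {v u : List X}
    (h : A.EEquiv v u) : ∃ f ∈ A.autGroup, f v = u := by
  refine h.of_equivalence (R := fun v u => ∃ f ∈ A.autGroup, f v = u)
    ⟨fun v => ⟨1, one_mem _, rfl⟩, ?_, ?_⟩ fun s v _ =>
      ⟨.ofBijective _ (hA.bijective_act s), Subgroup.subset_closure ⟨s, fun _ => rfl⟩, rfl⟩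
  · rintro v _ ⟨f, hf, rfl⟩
    exact ⟨f⁻¹, inv_mem hf, f.symm_apply_apply v⟩
  · rintro v _ _ ⟨f, hf, rfl⟩ ⟨f', hf', rfl⟩
    exact ⟨f' * f, mul_mem hf' hf, rfl⟩

theorem Invertible.ncard_eClass_le_card_autGroup (hA : A.Invertible) [Finite A.autGroup]
    (w : List X) : (A.eClass w).ncard ≤ Nat.card A.autGroup := by
  have hsub : A.eClass w ⊆ Set.range fun f : A.autGroup => f.1 w := fun u hu => by
    obtain ⟨f, hf, hfw⟩ := hA.exists_mem_autGroup_of_eEquiv (EEquiv.symm hu)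
    exact ⟨⟨f, hf⟩, hfw⟩
  calc (A.eClass w).ncard ≤ (Set.range fun f : A.autGroup => f.1 w).ncard :=
        Set.ncard_le_ncard hsub (Set.finite_range _)
    _ ≤ (Set.univ : Set A.autGroup).ncard := by
        rw [← Set.image_univ]
        exact Set.ncard_image_le Set.finite_univ
    _ = Nat.card A.autGroup := Set.ncard_univ _

end Invertible

section Bounds

/-- The number of profiles over `n` states with `N` labels. -/
def profileBound (n N : ℕ) : ℕ := 2 ^ (N * n) * (2 ^ (N * 2 * (N * 2)) * 2 ^ (N * 2))

/-- A bound for the forward orbits of a bounded automaton with `n` states over `k` letters whose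
group is finite. -/
def orbitBound (n k : ℕ) : ℕ :=
  (edgeBound n k * 2 + 1) *
    (edgeBound n k * (2 * k) + 1) ^ profileBound n (edgeBound n k + 1)

/-- A length beyond which the words of states act as shorter words, if the group is finite:
the number of maps assigning to `n` self-maps and a point of a set with `orbitBound n k` elements
a point of this set. -/
def lengthBound (n k : ℕ) : ℕ :=
  orbitBound n k ^ ((orbitBound n k ^ orbitBound n k) ^ n * orbitBound n k)

/-- A level that separates different actions of words of at most `lengthBound n k + 1` states. -/
def depthBound (n k : ℕ) : ℕ := (n + 1) ^ (lengthBound n k + 1 + lengthBound n k)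

theorem card_profile (S : Type*) [Finite S] (N : ℕ) :
    Nat.card (Profile S N) = profileBound (Nat.card S) N := by
  have := Fintype.ofFinite S
  simp only [Profile, profileBound, Nat.card_eq_fintype_card, Fintype.card_prod, Fintype.card_set,
    Fintype.card_fin, Fintype.card_bool]

theorem Bounded.ncard_range_words_act_le [Finite S] [Finite X] [Nonempty X] (hB : A.Bounded)
    (hA : A.Invertible) [Finite A.autGroup] (v : List X) :
    (Set.range fun g => A.words.act g v).ncard ≤ orbitBound (Nat.card S) (Nat.card X) := by
  refine Mealy.ncard_range_words_act_le hB.ncard_nontrivialEdges_le (fun w =>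
    ncard_eClass_le hB.ncard_nontrivialEdges_le fun u _ => ?_) v
  rw [← card_profile]
  exact ncard_mergingPrefixes_le hB.ncard_nontrivialEdges_le hA.ncard_eClass_le_card_autGroup u

end Bounds

section Shortening

theorem words_act_congr_of_foldr [Finite X] {D : ℕ} {v : List X}
    (hv : (Set.range fun g => A.words.act g v).ncard ≤ D) {g h : List S}
    (hgh : ∀ (ρ : S → Fin D → Fin D) (p : Fin D), g.foldr ρ p = h.foldr ρ p) :
    A.words.act g v = A.words.act h v := by
  set O := Set.range fun g => A.words.act g v
  have hmem (g : List S) : A.words.act g v ∈ O := ⟨g, rfl⟩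
  have hfin : O.Finite := finite_range_words_act A v
  have hD : 0 < D := ((Set.ncard_pos hfin).2 ⟨_, hmem []⟩).trans_le hv
  have : Nonempty (Fin D) := ⟨⟨0, hD⟩⟩
  obtain ⟨f, -, hf⟩ := hfin.exists_injOn_of_encard_le (t := (Set.univ : Set (Fin D))) (by
    rw [← hfin.cast_ncard_eq, Set.encard_univ, ENat.card_eq_coe_fintype_card, Fintype.card_fin]
    exact_mod_cast hv)
  let ρ : S → Fin D → Fin D := fun s d => f (A.act s (Function.invFunOn f O d))
  have hρ (g : List S) : g.foldr ρ (f v) = f (A.words.act g v) := by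
    induction g with
    | nil => rw [words_act_nil, List.foldr_nil]
    | cons s g ih =>
      rw [List.foldr_cons, ih, words_act_cons]
      simp only [ρ, hf.leftInvOn_invFunOn (hmem g)]
  exact hf (hmem g) (hmem h) (by rw [← hρ, ← hρ, hgh])

/-- Two suffixes of a long word of states act equally on all tables, hence on all words. -/
theorem exists_length_lt_words_act_eq [Finite S] [Finite X] {D : ℕ}
    (hD : ∀ v, (Set.range fun g => A.words.act g v).ncard ≤ D) {g : List S}
    (hg : D ^ ((D ^ D) ^ Nat.card S * D) ≤ g.length) :
    ∃ h : List S, h.length < g.length ∧ A.words.act g = A.words.act h := by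
  let Φ : List S → (S → Fin D → Fin D) × Fin D → Fin D := fun w a => w.reverse.foldr a.1 a.2
  have hΦ : (Set.range Φ).ncard ≤ g.reverse.length := by
    rw [List.length_reverse]
    refine (Set.ncard_le_card _).trans (le_of_eq_of_le ?_ hg)
    simp only [Nat.card_fun, Nat.card_prod, Nat.card_eq_fintype_card (α := Fin D), Fintype.card_fin]
  obtain ⟨z, u, w, hgzuw, hu, heq⟩ := exists_apply_append_eq Φ (Set.toFinite _) hΦ
  obtain rfl : g = w.reverse ++ (z ++ u).reverse := by
    rw [← List.reverse_append, ← hgzuw, List.reverse_reverse]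
  refine ⟨w.reverse ++ z.reverse, ?_, funext fun v => ?_⟩
  · have := List.length_pos_iff.2 hu
    simp only [List.length_append, List.length_reverse]
    omega
  · rw [words_act_append, words_act_append,
      words_act_congr_of_foldr (hD v) fun ρ p => congrFun heq (ρ, p)]

end Shortening

section EqualityTest

/-- A shortest word distinguishing `s` and `t` visits no pair of sections twice before its last
letter. -/
theorem act_eq_of_length_le {s t : S} {L : ℕ}
    (hfin : (Set.range fun w => (A.sec s w, A.sec t w)).Finite)
    (hL : (Set.range fun w => (A.sec s w, A.sec t w)).ncard ≤ L)
    (h : ∀ v : List X, v.length ≤ L → A.act s v = A.act t v) : A.act s = A.act t := by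
  funext v
  induction hm : v.length using Nat.strong_induction_on generalizing v with
  | _ m ih =>
    subst hm
    by_cases hvL : v.length ≤ L
    · exact h v hvL
    obtain rfl | ⟨v, x, rfl⟩ := List.eq_nil_or_concat' v
    · rfl
    obtain ⟨z, u, w, rfl, hu, heq⟩ := exists_apply_append_eq _ hfin (w := v)
      (hL.trans (by simpa using hvL))
    obtain ⟨hs, ht⟩ := Prod.mk.inj heq
    have hpos := List.length_pos_iff.2 hu
    have hzu : A.act s (z ++ u) = A.act t (z ++ u) := ih _ (by simp) _ rfl
    have hzw : A.act s (z ++ (w ++ [x])) = A.act t (z ++ (w ++ [x])) :=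
      ih _ (by simp only [List.length_append]; omega) _ rfl
    rw [act_append, act_append A t] at hzw
    rw [List.append_assoc, act_append, act_append A t, hs, ht, hzu,
      List.append_inj_right hzw (by rw [length_act, length_act])]

theorem words_act_eq_of_length_le [Finite S] {g h : List S} {B C : ℕ} (hg : g.length ≤ B)
    (hh : h.length ≤ C)
    (heq : ∀ v : List X, v.length ≤ (Nat.card S + 1) ^ (B + C) →
      A.words.act g v = A.words.act h v) : A.words.act g = A.words.act h := by
  let P : Set (List S × List S) := {g' | g'.length = g.length} ×ˢ {h' | h'.length = h.length}
  have hsub : (Set.range fun w => (A.words.sec g w, A.words.sec h w)) ⊆ P :=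
    Set.range_subset_iff.2 fun w => ⟨length_words_sec A g w, length_words_sec A h w⟩
  have hP : P.Finite := (List.finite_length_eq S _).prod (List.finite_length_eq S _)
  refine act_eq_of_length_le (hP.subset hsub) ((Set.ncard_le_ncard hsub hP).trans ?_) heq
  have hpow {a b : ℕ} (hab : a ≤ b) : Nat.card S ^ a ≤ (Nat.card S + 1) ^ b :=
    (Nat.pow_le_pow_left (Nat.le_succ _) a).trans (Nat.pow_le_pow_right (Nat.succ_pos _) hab)
  rw [Set.ncard_prod, ncard_setOf_length_eq, ncard_setOf_length_eq, pow_add]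
  exact Nat.mul_le_mul (hpow hg) (hpow hh)

end EqualityTest

section FinitenessCriterion

/-- The submonoid of the permutations that act as some word of states. -/
def wordPerms (A : Mealy S X) : Submonoid (Equiv.Perm (List X)) where
  carrier := {f | ∃ g, ⇑f = A.words.act g}
  one_mem' := ⟨[], funext fun v => (words_act_nil A v).symm⟩
  mul_mem' := by
    rintro f f' ⟨g, hg⟩ ⟨g', hg'⟩
    exact ⟨g ++ g', funext fun v => by rw [Equiv.Perm.mul_apply, words_act_append, hg, hg']⟩

/-- A finite monoid of permutations is a group. -/
theorem finite_autGroup_of_finite_range (h : (Set.range A.words.act).Finite) :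
    Finite A.autGroup := by
  have hfin : (A.wordPerms : Set (Equiv.Perm (List X))).Finite :=
    (h.preimage Equiv.coe_fn_injective.injOn).subset fun _ ⟨g, hg⟩ => ⟨g, hg.symm⟩
  have hgen : {f : Equiv.Perm (List X) | ∃ s, ∀ v, f v = A.act s v} ⊆ A.wordPerms := by
    rintro f ⟨s, hs⟩
    exact ⟨[s], funext fun v => by rw [hs, words_act_cons, words_act_nil]⟩
  have hle : A.autGroup.toSubmonoid ≤ A.wordPerms := by
    rw [autGroup, Subgroup.closure_toSubmonoid_of_isOfFinOrder fun f hf =>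
      finite_powers.1 (hfin.subset (Submonoid.powers_le.2 (hgen hf)))]
    exact Submonoid.closure_le.2 hgen
  exact (hfin.subset hle).to_subtype

theorem finite_range_words_act_of_shortening [Finite S] {B : ℕ}
    (hB : ∀ g : List S, g.length ≤ B + 1 →
      ∃ h : List S, h.length ≤ B ∧ A.words.act g = A.words.act h) :
    (Set.range A.words.act).Finite := by
  refine ((List.finite_length_le S B).image A.words.act).subset ?_
  rintro _ ⟨g, rfl⟩
  induction g with
  | nil => exact ⟨[], Nat.zero_le B, rfl⟩
  | cons s g ih =>
    obtain ⟨h, hh, heq⟩ := ih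
    obtain ⟨h', hh', heq'⟩ := hB (s :: h) (Nat.succ_le_succ hh)
    exact ⟨h', hh', heq'.symm.trans (funext fun v => by rw [words_act_cons, words_act_cons, heq])⟩

theorem Bounded.finite_autGroup_iff [Finite S] [Finite X] [Nonempty X] (hB : A.Bounded)
    (hA : A.Invertible) : Finite A.autGroup ↔
      ∀ g : List S, g.length ≤ lengthBound (Nat.card S) (Nat.card X) + 1 →
        ∃ h : List S, h.length ≤ lengthBound (Nat.card S) (Nat.card X) ∧
          ∀ v : List X, v.length ≤ depthBound (Nat.card S) (Nat.card X) →
            A.words.act g v = A.words.act h v := by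
  constructor
  · intro _ g hg
    by_cases hgB : g.length ≤ lengthBound (Nat.card S) (Nat.card X)
    · exact ⟨g, hgB, fun _ _ => rfl⟩
    · obtain ⟨h, hh, heq⟩ :=
        exists_length_lt_words_act_eq (hB.ncard_range_words_act_le hA) (not_le.1 hgB).le
      exact ⟨h, Nat.le_of_lt_succ (hh.trans_le hg), fun v _ => congrFun heq v⟩
  · intro H
    refine finite_autGroup_of_finite_range (finite_range_words_act_of_shortening
      (B := lengthBound (Nat.card S) (Nat.card X)) fun g hg => ?_)
    obtain ⟨h, hh, heq⟩ := H g hg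
    exact ⟨h, hh, words_act_eq_of_length_le hg hh heq⟩

end FinitenessCriterion

/-! ### Decidability of the criterion -/

theorem act_eq_foldl (A : Mealy S X) (s : S) (v : List X) : A.act s v =
    (v.foldl (fun p x => ((A.step p.1 x).2, p.2 ++ [(A.step p.1 x).1])) (s, [])).2 := by
  suffices h : ∀ u : List X,
      (v.foldl (fun p x => ((A.step p.1 x).2, p.2 ++ [(A.step p.1 x).1])) (s, u)).2 =
        u ++ A.act s v from (h []).symm
  induction v generalizing s with
  | nil => exact fun u => (List.append_nil u).symm
  | cons x v ih =>
    intro u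
    rw [List.foldl_cons, ih, act, List.append_assoc, List.singleton_append]

section Homomorphism

variable {S' X' : Type*} {B : Mealy S' X'} {φ : S → S'} {ψ : X → X'}

theorem act_map (h : ∀ s x, B.step (φ s) (ψ x) = (A.step s x).map ψ φ) (s : S) (v : List X) :
    B.act (φ s) (v.map ψ) = (A.act s v).map ψ := by
  induction v generalizing s with
  | nil => rfl
  | cons x v ih => simp only [List.map_cons, act, h, Prod.map_fst, Prod.map_snd, ih]

theorem words_act_map (h : ∀ s x, B.step (φ s) (ψ x) = (A.step s x).map ψ φ) (g : List S)
    (v : List X) : B.words.act (g.map φ) (v.map ψ) = (A.words.act g v).map ψ := by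
  induction g with
  | nil => rw [List.map_nil, words_act_nil, words_act_nil]
  | cons s g ih => rw [List.map_cons, words_act_cons, words_act_cons, ih, act_map h]

end Homomorphism

end Mealy

theorem getElem?_flatMap_mul_add {α β : Type*} {k : ℕ} {f : α → List β}
    (hf : ∀ a, (f a).length = k) (l : List α) (i : ℕ) {j : ℕ} (hj : j < k) :
    (l.flatMap f)[i * k + j]? = l[i]?.bind fun a => (f a)[j]? := by
  induction l generalizing i with
  | nil => rfl
  | cons a l ih =>
    rw [List.flatMap_cons]
    cases i with
    | zero => rw [List.getElem?_append_left (by rw [hf]; omega)]; simp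
    | succ i =>
      rw [List.getElem?_append_right (by rw [hf, add_one_mul]; omega), hf, List.getElem?_cons_succ,
        ← ih]
      congr 1
      rw [add_one_mul]
      omega

section PrimitiveRecursion

theorem primrec₂_pow : Primrec₂ fun a b : ℕ => a ^ b := Primrec₂.unpaired'.1 Nat.Primrec.pow

variable {α β : Type*} [Primcodable α] [Primcodable β] {f : α → List β} {p : α → β → Prop}

theorem primrecPred_forall_mem_list (hf : Primrec f) (hp : PrimrecRel p) :
    PrimrecPred fun a => ∀ b ∈ f a, p a b :=
  (PrimrecRel.forall_mem_list (R := fun b a => p a b) hp.swap).comp hf .id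

theorem primrecPred_exists_mem_list (hf : Primrec f) (hp : PrimrecRel p) :
    PrimrecPred fun a => ∃ b ∈ f a, p a b :=
  (PrimrecRel.exists_mem_list (R := fun b a => p a b) hp.swap).comp hf .id

/-- A list of the words of length at most `r` over the letters `0, …, a - 1`. -/
def wordsUpTo (a r : ℕ) : List (List ℕ) :=
  Nat.rec [[]] (fun _ l => [] :: l.flatMap fun w => (List.range a).map (· :: w)) r

theorem mem_wordsUpTo {a r : ℕ} {w : List ℕ} :
    w ∈ wordsUpTo a r ↔ ∃ u : List (Fin a), u.length ≤ r ∧ u.map Fin.val = w := by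
  induction r generalizing w with
  | zero => simp [wordsUpTo, eq_comm]
  | succ r ih =>
    change w ∈ [] :: (wordsUpTo a r).flatMap (fun w => (List.range a).map (· :: w)) ↔ _
    simp only [List.mem_cons, List.mem_flatMap, List.mem_map, List.mem_range, ih]
    constructor
    · rintro (rfl | ⟨_, ⟨u, hu, rfl⟩, x, hx, rfl⟩)
      exacts [⟨[], Nat.zero_le _, rfl⟩, ⟨⟨x, hx⟩ :: u, Nat.succ_le_succ hu, rfl⟩]
    · rintro ⟨_ | ⟨x, u⟩, hu, rfl⟩
      exacts [.inl rfl, .inr ⟨_, ⟨u, Nat.le_of_succ_le_succ hu, rfl⟩, x, x.2, rfl⟩]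

theorem primrec₂_wordsUpTo : Primrec₂ wordsUpTo := by
  have hcons : Primrec₂ fun (q : ℕ × List ℕ) (i : ℕ) => i :: q.2 :=
    Primrec.list_cons.comp₂ Primrec₂.right (Primrec.snd.comp₂ Primrec₂.left)
  have hmap : Primrec₂ fun (a : ℕ) (w : List ℕ) => (List.range a).map (· :: w) :=
    Primrec.list_map (Primrec.list_range.comp Primrec.fst) hcons
  have hstep : Primrec₂ fun (a : ℕ) (q : ℕ × List (List ℕ)) =>
      [] :: q.2.flatMap fun w => (List.range a).map (· :: w) :=
    Primrec.list_cons.comp₂ (Primrec₂.const []) (Primrec.list_flatMap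
      (Primrec.snd.comp Primrec.snd) (hmap.comp₂ (Primrec.fst.comp₂ Primrec₂.left) Primrec₂.right))
  exact Primrec.nat_rec (Primrec.const [[]]) hstep

end PrimitiveRecursion

namespace Mealy

section PrimitiveRecursion

variable {α S X : Type*} [Primcodable α] [Primcodable S] [Primcodable X] {B : α → Mealy S X}

theorem primrec_act (hB : Primrec fun p : α × S × X => (B p.1).step p.2.1 p.2.2) :
    Primrec fun p : α × S × List X => (B p.1).act p.2.1 p.2.2 := by
  have hstep : Primrec₂ fun (p : α × S × List X) (q : (S × List X) × X) =>
      (B p.1).step q.1.1 q.2 := hB.comp (.pair (Primrec.fst.comp .fst)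
    (.pair (Primrec.fst.comp (Primrec.fst.comp .snd)) (Primrec.snd.comp .snd)))
  have hnext : Primrec₂ fun (p : α × S × List X) (q : (S × List X) × X) =>
      (((B p.1).step q.1.1 q.2).2, q.1.2 ++ [((B p.1).step q.1.1 q.2).1]) :=
    Primrec.pair (Primrec.snd.comp hstep)
      (Primrec.list_concat.comp (Primrec.snd.comp (Primrec.fst.comp .snd)) (Primrec.fst.comp hstep))
  simp only [act_eq_foldl]
  exact Primrec.snd.comp (Primrec.list_foldl (Primrec.snd.comp .snd)
    (.pair (Primrec.fst.comp .snd) (.const [])) hnext)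

theorem primrec_words_act (hB : Primrec fun p : α × S × X => (B p.1).step p.2.1 p.2.2) :
    Primrec fun p : α × List S × List X => (B p.1).words.act p.2.1 p.2.2 := by
  have hact : Primrec₂ fun (p : α × List S × List X) (q : S × List X) => (B p.1).act q.1 q.2 :=
    (primrec_act hB).comp (.pair (Primrec.fst.comp .fst) .snd)
  simp only [words_act_eq_foldr]
  exact Primrec.list_foldr (Primrec.fst.comp .snd) (Primrec.snd.comp .snd) hact

theorem primrecPred_words_act_eq {L₁ L₂ : α → List (List S)} {L₃ : α → List (List X)}
    (hB : Primrec fun p : α × S × X => (B p.1).step p.2.1 p.2.2) (h₁ : Primrec L₁)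
    (h₂ : Primrec L₂) (h₃ : Primrec L₃) : PrimrecPred fun a =>
      ∀ g ∈ L₁ a, ∃ h ∈ L₂ a, ∀ v ∈ L₃ a, (B a).words.act g v = (B a).words.act h v := by
  have hact {f : ((α × List S) × List S) × List X → List S} (hf : Primrec f) :
      Primrec fun p => (B p.1.1.1).words.act (f p) p.2 := (primrec_words_act hB).comp
    (.pair (Primrec.fst.comp (Primrec.fst.comp .fst)) (.pair hf .snd))
  have heq : PrimrecRel fun (p : (α × List S) × List S) (v : List X) =>
      (B p.1.1).words.act p.1.2 v = (B p.1.1).words.act p.2 v :=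
    Primrec.eq.comp (hact (Primrec.snd.comp (Primrec.fst.comp .fst)))
      (hact (Primrec.snd.comp .fst))
  have hforall : PrimrecRel fun (p : α × List S) (h : List S) =>
      ∀ v ∈ L₃ p.1, (B p.1).words.act p.2 v = (B p.1).words.act h v :=
    primrecPred_forall_mem_list (h₃.comp (Primrec.fst.comp .fst)) heq
  have hexists : PrimrecRel fun (a : α) (g : List S) =>
      ∃ h ∈ L₂ a, ∀ v ∈ L₃ a, (B a).words.act g v = (B a).words.act h v :=
    primrecPred_exists_mem_list (h₂.comp .fst) hforall
  exact primrecPred_forall_mem_list h₁ hexists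

theorem primrec₂_edgeBound : Primrec₂ edgeBound :=
  have hpow : Primrec₂ fun n k : ℕ => k ^ n := primrec₂_pow.swap
  Primrec.nat_mul.comp₂ Primrec₂.left (Primrec.nat_mul.comp₂ hpow hpow)

theorem primrec₂_profileBound : Primrec₂ profileBound := by
  have hpow {f : ℕ → ℕ → ℕ} (hf : Primrec₂ f) : Primrec₂ fun n N => 2 ^ f n N :=
    primrec₂_pow.comp₂ (Primrec₂.const 2) hf
  have hdouble : Primrec₂ fun _ N : ℕ => N * 2 :=
    Primrec.nat_mul.comp₂ Primrec₂.right (Primrec₂.const 2)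
  exact Primrec.nat_mul.comp₂ (hpow (Primrec.nat_mul.comp₂ Primrec₂.right Primrec₂.left))
    (Primrec.nat_mul.comp₂ (hpow (Primrec.nat_mul.comp₂ hdouble hdouble)) (hpow hdouble))

theorem primrec₂_orbitBound : Primrec₂ orbitBound := by
  have hedges : Primrec₂ fun n k => edgeBound n k * 2 + 1 := Primrec.succ.comp₂
    (Primrec.nat_mul.comp₂ primrec₂_edgeBound (Primrec₂.const 2))
  have hbase : Primrec₂ fun n k => edgeBound n k * (2 * k) + 1 := Primrec.succ.comp₂
    (Primrec.nat_mul.comp₂ primrec₂_edgeBound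
      (Primrec.nat_mul.comp₂ (Primrec₂.const 2) Primrec₂.right))
  exact Primrec.nat_mul.comp₂ hedges (primrec₂_pow.comp₂ hbase
    (primrec₂_profileBound.comp₂ Primrec₂.left (Primrec.succ.comp₂ primrec₂_edgeBound)))

theorem primrec₂_lengthBound : Primrec₂ lengthBound :=
  have hO := primrec₂_orbitBound
  primrec₂_pow.comp₂ hO (Primrec.nat_mul.comp₂
    (primrec₂_pow.comp₂ (primrec₂_pow.comp₂ hO hO) Primrec₂.left) hO)

theorem primrec₂_depthBound : Primrec₂ depthBound :=
  have hB := primrec₂_lengthBound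
  primrec₂_pow.comp₂ (Primrec.succ.comp₂ Primrec₂.left)
    (Primrec.nat_add.comp₂ (Primrec.succ.comp₂ hB) hB)

end PrimitiveRecursion

section Tables

/-- The automaton over `ℕ` whose transition from the state `s` at the letter `x < k` is coded by
the entry `s * k + x` of the table `T`. -/
def ofTable (k : ℕ) (T : List ℕ) : Mealy ℕ ℕ where
  step s x := (T.getD (s * k + x) 0).unpair

theorem primrec_ofTable_step :
    Primrec fun p : (ℕ × List ℕ) × ℕ × ℕ => (ofTable p.1.1 p.1.2).step p.2.1 p.2.2 :=
  Primrec.unpair.comp ((Primrec.list_getD 0).comp (Primrec.snd.comp .fst)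
    (Primrec.nat_add.comp (Primrec.nat_mul.comp (Primrec.fst.comp .snd) (Primrec.fst.comp .fst))
      (Primrec.snd.comp .snd)))

/-- The table of an automaton, in the order chosen by `encodeAut`. -/
def table {n k : ℕ} (step : Fin n → Fin k → Fin k × Fin n) : List ℕ :=
  (List.finRange n).flatMap fun s =>
    (List.finRange k).map fun x => Nat.pair (step s x).1 (step s x).2

theorem ofTable_table_step {n k : ℕ} (step : Fin n → Fin k → Fin k × Fin n) (s : Fin n)
    (x : Fin k) : (ofTable k (table step)).step s x = (step s x).map Fin.val Fin.val := by
  change ((table step).getD (s * k + x) 0).unpair = _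
  rw [table, List.getD_eq_getElem?_getD, getElem?_flatMap_mul_add (fun _ => by simp) _ _ x.2]
  simp [Prod.map]

theorem ofTable_table_words_act {n k : ℕ} (step : Fin n → Fin k → Fin k × Fin n)
    (g : List (Fin n)) (v : List (Fin k)) :
    (ofTable k (table step)).words.act (g.map Fin.val) (v.map Fin.val) =
      ((Mealy.mk step).words.act g v).map Fin.val :=
  words_act_map (ofTable_table_step step) g v

theorem encodeAut_eq {n k : ℕ} (step : Fin n → Fin k → Fin k × Fin n) :
    encodeAut n k step = Encodable.encode (n, k, table step) := rfl

end Tables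

section FinitenessTest

/-- The criterion of `Bounded.finite_autGroup_iff` for the automaton with `n` states over `k`
letters given by the table `T`, where `c = (n, k, T)`. -/
def FinitenessTest (c : ℕ × ℕ × List ℕ) : Prop :=
  ∀ g ∈ wordsUpTo c.1 (lengthBound c.1 c.2.1 + 1),
    ∃ h ∈ wordsUpTo c.1 (lengthBound c.1 c.2.1),
      ∀ v ∈ wordsUpTo c.2.1 (depthBound c.1 c.2.1),
        (ofTable c.2.1 c.2.2).words.act g v = (ofTable c.2.1 c.2.2).words.act h v

theorem finitenessTest_table {n k : ℕ} (step : Fin n → Fin k → Fin k × Fin n) :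
    FinitenessTest (n, k, table step) ↔ ∀ g : List (Fin n), g.length ≤ lengthBound n k + 1 →
      ∃ h : List (Fin n), h.length ≤ lengthBound n k ∧
        ∀ v : List (Fin k), v.length ≤ depthBound n k →
          (Mealy.mk step).words.act g v = (Mealy.mk step).words.act h v := by
  have hinj : Function.Injective (List.map (Fin.val : Fin k → ℕ)) :=
    List.map_injective_iff.2 Fin.val_injective
  simp only [FinitenessTest, mem_wordsUpTo, forall_exists_index, and_imp, forall_apply_eq_imp_iff₂,
    exists_exists_and_eq_and, ofTable_table_words_act, hinj.eq_iff]

theorem primrecPred_finitenessTest : PrimrecPred FinitenessTest := by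
  have hk : Primrec fun c : ℕ × ℕ × List ℕ => c.2.1 := Primrec.fst.comp .snd
  have hlength : Primrec fun c : ℕ × ℕ × List ℕ => lengthBound c.1 c.2.1 :=
    primrec₂_lengthBound.comp .fst hk
  have hdepth : Primrec fun c : ℕ × ℕ × List ℕ => depthBound c.1 c.2.1 :=
    primrec₂_depthBound.comp .fst hk
  have hstep : Primrec fun p : (ℕ × ℕ × List ℕ) × ℕ × ℕ =>
      (ofTable p.1.2.1 p.1.2.2).step p.2.1 p.2.2 :=
    primrec_ofTable_step.comp (.pair (Primrec.snd.comp .fst) .snd)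
  exact primrecPred_words_act_eq hstep (primrec₂_wordsUpTo.comp .fst (Primrec.succ.comp hlength))
    (primrec₂_wordsUpTo.comp .fst hlength) (primrec₂_wordsUpTo.comp hk hdepth)

end FinitenessTest

end Mealy

/-- The finiteness problem for groups generated by bounded invertible
Mealy automata is decidable. -/
theorem finiteness_problem_decidable :
    ∃ F : ℕ → Bool, Computable F ∧
      ∀ (n k : ℕ) (step : Fin n → Fin k → Fin k × Fin n),
        2 ≤ k → (Mealy.mk step).Invertible → (Mealy.mk step).Bounded →
          (F (encodeAut n k step) = true ↔ Finite (Mealy.mk step).autGroup) := by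
  classical
  have hF : PrimrecPred fun c => Mealy.FinitenessTest (Denumerable.ofNat (ℕ × ℕ × List ℕ) c) :=
    Mealy.primrecPred_finitenessTest.comp (Primrec.ofNat _)
  refine ⟨_, hF.decide.to_comp, fun n k step hk hA hB => ?_⟩
  have : Nonempty (Fin k) := ⟨⟨0, by omega⟩⟩
  rw [decide_eq_true_iff, Mealy.encodeAut_eq, Denumerable.ofNat_encode, Mealy.finitenessTest_table,
    hB.finite_autGroup_iff hA, Nat.card_fin, Nat.card_fin]
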